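/- arXiv:2602.07965 — 2 statements merged into one kernel-verified Lean document; each statement's English description precedes it below -/
import Mathlib

section
/- For every n ≥ 1 and every integer i ≥ 3, in ℤ[x₁,…,xₙ] one has m_{(2,2,2,1^{i−3})} = σ₃·σᵢ − (i−1)·σ₂·σ_{i+1} + ((i² − i − 2)/2)·σ₁·σ_{i+2} − ((i³ − 7i + 6)/6)·σ_{i+3}. (The coefficients (i² − i − 2)/2 and (i³ − 7i + 6)/6 = (i−1)(i−2)(i+3)/6 are integers.) -/
open MvPolynomial

/-- The monomial symmetric polynomial in `n` variables over `ℤ` associated with the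
multiset of (positive) parts `lam`: the sum of all distinct monomials whose multiset of
nonzero exponents equals `lam`. -/
noncomputable def mSym (n : ℕ) (lam : Multiset ℕ) : MvPolynomial (Fin n) ℤ :=
  ∑ f : Fin n → Fin (lam.sum + 1),
    if Multiset.map (fun i => (f i : ℕ)) (Finset.univ.filter fun i => (f i : ℕ) ≠ 0).val = lam
    then ∏ i, X i ^ (f i : ℕ) else 0

/-!
Multiplying out `σ_p σ_{p+r}` gives one monomial for each pair of sets `S`, `T` of variables with
`#S = p` and `#T = p + r`, namely the square-free part over `S ∪ T` times that over `S ∩ T`.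
A pair with given `S ∩ T` and `S ∪ T` is determined by the `c`-set `S \ T` inside the
symmetric difference, which has `r + 2c` elements, so
`σ_p σ_{p+r} = ∑_{a+c=p} (r+2c choose c) m_(2^a, 1^{r+2c})`.
This triangular system is inverted with the coefficients of `(1 - z) / (1 + z)^{b+1}`: against
`(1 + z)^{b+2k}` they give `(1 - z) (1 + z)^{2k-1}`, whose middle coefficient vanishes for `k ≥ 1`.
-/

open Finset

section LucasTriangle

/-- The Lucas triangle, i.e. the `(1, 2)`-Pascal triangle with entries
`(b + 2 * j) / (b + j) * (b + j).choose j`: up to sign, the coefficients expressing the monomial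
symmetric polynomials `m_(2^a, 1^b)` through products of two elementary ones. The case `j = 0` is
separate because `(b + j - 1).choose (j - 1)` is wrong there for truncated subtraction. -/
def lucasTriangle (b : ℕ) : ℕ → ℕ
  | 0 => 1
  | j + 1 => (b + j + 1).choose (j + 1) + (b + j).choose j

@[simp]
lemma lucasTriangle_zero (b : ℕ) : lucasTriangle b 0 = 1 := rfl

lemma succ_mul_lucasTriangle_succ (b j : ℕ) :
    (j + 1) * lucasTriangle b (j + 1) = (b + 2 * (j + 1)) * (b + j).choose j := by
  have absorption := Nat.add_one_mul_choose_eq (b + j) j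
  simp only [lucasTriangle]
  linear_combination -absorption

lemma lucasTriangle_one (b : ℕ) : lucasTriangle b 1 = b + 2 := by
  simpa using succ_mul_lucasTriangle_succ b 0

lemma two_mul_lucasTriangle_two (b : ℕ) : 2 * lucasTriangle b 2 = (b + 1) * (b + 4) := by
  simpa [mul_comm] using succ_mul_lucasTriangle_succ b 1

lemma six_mul_lucasTriangle_three (b : ℕ) :
    6 * lucasTriangle b 3 = (b + 1) * (b + 2) * (b + 6) := by
  have h := succ_mul_lucasTriangle_succ b 2
  have choose_two := Nat.add_one_mul_choose_eq (b + 1) 1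
  rw [Nat.choose_one_right] at choose_two
  linear_combination 2 * h - (b + 6) * choose_two

lemma natCast_lucasTriangle_two (b : ℕ) :
    (lucasTriangle b 2 : ℤ) = (((b : ℤ) + 3) ^ 2 - (b + 3) - 2) / 2 := by
  have := congrArg (Nat.cast : ℕ → ℤ) (two_mul_lucasTriangle_two b)
  push_cast at this
  exact (Int.ediv_eq_of_eq_mul_right two_ne_zero (by linear_combination -this)).symm

lemma natCast_lucasTriangle_three (b : ℕ) :
    (lucasTriangle b 3 : ℤ) = (((b : ℤ) + 3) ^ 3 - 7 * (b + 3) + 6) / 6 := by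
  have := congrArg (Nat.cast : ℕ → ℤ) (six_mul_lucasTriangle_three b)
  push_cast at this
  exact (Int.ediv_eq_of_eq_mul_right (by norm_num) (by linear_combination -this)).symm

lemma lucasTriangle_succ_succ (b j : ℕ) :
    lucasTriangle (b + 1) (j + 1) = lucasTriangle (b + 1) j + lucasTriangle b (j + 1) := by
  cases j with
  | zero => rw [zero_add, lucasTriangle_one, lucasTriangle_one, lucasTriangle, add_comm 1]
  | succ j =>
    have pascal := Nat.choose_succ_succ' (b + j + 2) (j + 1)
    have pascal' := Nat.choose_succ_succ' (b + j + 1) j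
    simp only [lucasTriangle, show b + 1 + (j + 1) = b + j + 2 by ring,
      show b + 1 + j = b + j + 1 by ring, show b + (j + 1) = b + j + 1 by ring]
    linear_combination pascal + pascal'

lemma one_add_X_pow_mul_mk_lucasTriangle (b : ℕ) :
    (1 + PowerSeries.X : PowerSeries ℤ) ^ (b + 1) *
      PowerSeries.mk (fun j => (-1) ^ j * (lucasTriangle b j : ℤ)) = 1 - PowerSeries.X := by
  induction b with
  | zero =>
    ext (_ | _ | j)
    · simp [lucasTriangle]
    · simp [add_mul, lucasTriangle]
    · simp [add_mul, lucasTriangle, PowerSeries.coeff_X, PowerSeries.coeff_one, pow_succ]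
  | succ b ih =>
    rw [pow_succ, mul_assoc, ← ih]
    congr 1
    ext (_ | j)
    · simp [lucasTriangle]
    · simp only [add_mul, one_mul, map_add, PowerSeries.coeff_succ_X_mul, PowerSeries.coeff_mk,
        lucasTriangle_succ_succ]
      push_cast
      ring

lemma sum_antidiagonal_lucasTriangle_mul_choose (b k : ℕ) :
    ∑ cj ∈ antidiagonal k, (-1) ^ cj.2 * (lucasTriangle b cj.2 : ℤ) * (b + 2 * k).choose cj.1 =
      if k = 0 then 1 else 0 := by
  obtain _ | k := k
  · simp [lucasTriangle]
  have coeff_pow (N c : ℕ) :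
      PowerSeries.coeff c ((1 + PowerSeries.X : PowerSeries ℤ) ^ N) = N.choose c := by
    rw [← Polynomial.coeff_one_add_X_pow ℤ N c, ← Polynomial.coeff_coe]
    simp
  have product : (1 + PowerSeries.X : PowerSeries ℤ) ^ (b + 2 * (k + 1)) *
      PowerSeries.mk (fun j => (-1) ^ j * (lucasTriangle b j : ℤ)) =
        (1 + PowerSeries.X) ^ (2 * k + 1) * (1 - PowerSeries.X) := by
    rw [← one_add_X_pow_mul_mk_lucasTriangle b, ← mul_assoc, ← pow_add]
    congr 2
    ring
  have middle_coeff := congrArg (PowerSeries.coeff (k + 1)) product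
  rw [PowerSeries.coeff_mul, mul_sub, mul_one, map_sub, PowerSeries.coeff_succ_mul_X, coeff_pow,
    coeff_pow, Nat.choose_symm_half, sub_self] at middle_coeff
  simp only [coeff_pow, PowerSeries.coeff_mk] at middle_coeff
  rw [if_neg k.succ_ne_zero, ← middle_coeff]
  exact sum_congr rfl fun _ _ => mul_comm _ _

end LucasTriangle

section FinsetSums

lemma sum_antidiagonal_antidiagonal_fst {A M : Type*} [AddMonoid A] [HasAntidiagonal A]
    [AddCommMonoid M] (n : A) (f : A → A → A → M) :
    ∑ pj ∈ antidiagonal n, ∑ ic ∈ antidiagonal pj.1, f ic.1 ic.2 pj.2 =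
      ∑ ik ∈ antidiagonal n, ∑ cj ∈ antidiagonal ik.2, f ik.1 cj.1 cj.2 := by
  simp only [sum_sigma']
  refine sum_nbij' (fun x => ⟨(x.2.1, x.2.2 + x.1.2), (x.2.2, x.1.2)⟩)
    (fun x => ⟨(x.1.1 + x.2.1, x.2.2), (x.1.1, x.2.1)⟩) ?_ ?_ ?_ ?_ ?_
  all_goals
    rintro ⟨⟨_, _⟩, _, _⟩ h
    simp only [mem_sigma, HasAntidiagonal.mem_antidiagonal] at h
    obtain ⟨rfl, rfl⟩ := h
    simp [add_assoc]

variable {σ M : Type*} [Fintype σ] [DecidableEq σ] [AddCommMonoid M]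

-- Reindexed by `A = S ∩ T`, `U = S ∪ T` and `C = S \ T`; the inverse is `S = A ∪ C`, `T = U \ C`.
lemma sum_powersetCard_inter_union_eq_sum_sdiff (p r : ℕ) (f : Finset σ → Finset σ → M) :
    ∑ S ∈ powersetCard p univ, ∑ T ∈ powersetCard (p + r) univ, f (S ∩ T) (S ∪ T) =
      ∑ ac ∈ antidiagonal p, ∑ U ∈ powersetCard (ac.1 + (r + 2 * ac.2)) univ,
        ∑ A ∈ powersetCard ac.1 U, ∑ _C ∈ powersetCard ac.2 (U \ A), f A U := by
  simp only [sum_sigma']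
  refine sum_nbij'
    (fun x => ⟨(#(x.1 ∩ x.2), #(x.1 \ x.2)), x.1 ∪ x.2, x.1 ∩ x.2, x.1 \ x.2⟩)
    (fun x => ⟨x.2.2.1 ∪ x.2.2.2, x.2.1 \ x.2.2.2⟩) ?_ ?_ ?_ ?_ fun _ _ => rfl
  · rintro ⟨S, T⟩ h
    simp only [mem_sigma, mem_powersetCard, subset_univ, true_and] at h
    simp only [mem_sigma, HasAntidiagonal.mem_antidiagonal, mem_powersetCard, subset_univ,
      true_and, and_true]
    have card_S := card_inter_add_card_sdiff S T
    have card_union := card_union_add_card_inter S T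
    exact ⟨by lia, by lia, inter_subset_union, by grind⟩
  · rintro ⟨⟨a, c⟩, U, A, C⟩ h
    simp only [mem_sigma, HasAntidiagonal.mem_antidiagonal, mem_powersetCard, subset_univ,
      true_and, subset_sdiff] at h
    obtain ⟨rfl, card_U, ⟨-, rfl⟩, ⟨hCU, hCA⟩, rfl⟩ := h
    simp only [mem_sigma, mem_powersetCard, subset_univ, true_and,
      card_union_of_disjoint hCA.symm, card_sdiff_of_subset hCU]
    lia
  · rintro ⟨S, T⟩ -
    have hS : S ∩ T ∪ S \ T = S := by grind
    have hT : (S ∪ T) \ (S \ T) = T := by grind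
    simp only [hS, hT]
  · rintro ⟨⟨a, c⟩, U, A, C⟩ h
    simp only [mem_sigma, HasAntidiagonal.mem_antidiagonal, mem_powersetCard, subset_univ,
      true_and, subset_sdiff, Finset.disjoint_left] at h
    obtain ⟨-, -, ⟨hAU, rfl⟩, ⟨hCU, hCA⟩, rfl⟩ := h
    have hA : (A ∪ C) ∩ (U \ C) = A := by grind
    have hC : (A ∪ C) \ (U \ C) = C := by grind
    have hU : (A ∪ C) ∪ (U \ C) = U := by grind
    simp only [hA, hC, hU]

lemma sum_powersetCard_inter_union (p r : ℕ) (f : Finset σ → Finset σ → M) :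
    ∑ S ∈ powersetCard p univ, ∑ T ∈ powersetCard (p + r) univ, f (S ∩ T) (S ∪ T) =
      ∑ ac ∈ antidiagonal p, (r + 2 * ac.2).choose ac.2 •
        ∑ U ∈ powersetCard (ac.1 + (r + 2 * ac.2)) univ, ∑ A ∈ powersetCard ac.1 U, f A U := by
  rw [sum_powersetCard_inter_union_eq_sum_sdiff]
  simp only [smul_sum]
  refine sum_congr rfl fun ac _ => sum_congr rfl fun U hU => sum_congr rfl fun A hA => ?_
  rw [mem_powersetCard] at hU hA
  rw [sum_const, card_powersetCard, card_sdiff_of_subset hA.1, hU.2, hA.2,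
    Nat.add_sub_cancel_left]

end FinsetSums

section TwoOneSymm

variable (σ R : Type*) [Fintype σ]

/-- The monomial symmetric polynomial `m_(2^a, 1^b)` in the variables `σ` over `R`. A monomial
is encoded by its support `U` and by the set `A ⊆ U` of the variables with exponent `2`. -/
noncomputable def twoOneSymm [CommSemiring R] (a b : ℕ) : MvPolynomial σ R :=
  ∑ U ∈ powersetCard (a + b) (univ : Finset σ), ∑ A ∈ powersetCard a U,
    (∏ i ∈ A, X i) * ∏ i ∈ U, X i

lemma esymm_mul_esymm_add [CommSemiring R] (p r : ℕ) :
    esymm σ R p * esymm σ R (p + r) =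
      ∑ ac ∈ antidiagonal p,
        (r + 2 * ac.2).choose ac.2 • twoOneSymm σ R ac.1 (r + 2 * ac.2) := by
  classical
  simp only [twoOneSymm, ← sum_powersetCard_inter_union p r fun A U : Finset σ =>
    (∏ i ∈ A, (X i : MvPolynomial σ R)) * ∏ i ∈ U, X i]
  rw [esymm, esymm, sum_mul_sum]
  refine sum_congr rfl fun S _ => sum_congr rfl fun T _ => ?_
  rw [mul_comm (∏ i ∈ S ∩ T, X i), prod_union_inter]

lemma twoOneSymm_eq_sum_esymm_mul_esymm [CommRing R] (a b : ℕ) :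
    twoOneSymm σ R a b =
      ∑ pj ∈ antidiagonal a, ((-1) ^ pj.2 * (lucasTriangle b pj.2 : ℤ)) •
        (esymm σ R pj.1 * esymm σ R (a + b + pj.2)) := by
  have expand : ∀ pj ∈ antidiagonal a,
      ((-1) ^ pj.2 * (lucasTriangle b pj.2 : ℤ)) •
        (esymm σ R pj.1 * esymm σ R (a + b + pj.2)) =
      ∑ ic ∈ antidiagonal pj.1, ((-1) ^ pj.2 * (lucasTriangle b pj.2 : ℤ) *
        (b + 2 * (ic.2 + pj.2)).choose ic.2) •
          twoOneSymm σ R ic.1 (b + 2 * (ic.2 + pj.2)) := by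
    rintro ⟨p, j⟩ hpj
    obtain rfl : p + j = a := HasAntidiagonal.mem_antidiagonal.mp hpj
    rw [show p + j + b + j = p + (b + 2 * j) by ring, esymm_mul_esymm_add, smul_sum]
    refine sum_congr rfl fun ic _ => ?_
    rw [show b + 2 * j + 2 * ic.2 = b + 2 * (ic.2 + j) by ring, ← natCast_zsmul _ (Nat.choose _ _),
      smul_smul]
  have collect (i k : ℕ) :
      ∑ cj ∈ antidiagonal k, ((-1) ^ cj.2 * (lucasTriangle b cj.2 : ℤ) *
        (b + 2 * (cj.1 + cj.2)).choose cj.1) • twoOneSymm σ R i (b + 2 * (cj.1 + cj.2)) =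
      if k = 0 then twoOneSymm σ R i b else 0 := by
    rw [sum_congr rfl fun cj hcj => by rw [HasAntidiagonal.mem_antidiagonal.mp hcj], ← sum_smul,
      sum_antidiagonal_lucasTriangle_mul_choose]
    split_ifs with hk <;> simp [hk]
  rw [sum_congr rfl expand, sum_antidiagonal_antidiagonal_fst a fun i c j =>
    ((-1) ^ j * (lucasTriangle b j : ℤ) * (b + 2 * (c + j)).choose c) •
      twoOneSymm σ R i (b + 2 * (c + j))]
  simp only [collect]
  rw [sum_eq_single (a, 0)] <;> aesop

end TwoOneSymm

section MSym

lemma eq_replicate_add_replicate_iff {α : Type*} [DecidableEq α] {x y : α} (hxy : x ≠ y)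
    {s : Multiset α} {a b : ℕ} :
    s = Multiset.replicate a x + Multiset.replicate b y ↔
      (∀ z ∈ s, z = x ∨ z = y) ∧ s.count x = a ∧ s.card = a + b := by
  constructor
  · rintro rfl
    refine ⟨fun z hz => ?_, by simp [Multiset.count_replicate, hxy.symm], by simp⟩
    exact (Multiset.mem_add.mp hz).imp Multiset.eq_of_mem_replicate Multiset.eq_of_mem_replicate
  · rintro ⟨mem, rfl, card⟩
    have split := Multiset.filter_add_not (· = x) s
    rw [Multiset.filter_eq'] at split
    have rest : s.filter (¬ · = x) = Multiset.replicate b y := by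
      refine Multiset.eq_replicate.mpr ⟨?_, fun z hz => ?_⟩
      · have := congrArg Multiset.card split
        rw [Multiset.card_add, Multiset.card_replicate] at this
        lia
      · rw [Multiset.mem_filter] at hz
        exact (mem z hz.1).resolve_left hz.2
    rw [← rest, split]

lemma map_support_eq_replicate_two_add_replicate_one_iff {ι : Type*} [Fintype ι] (f : ι → ℕ)
    (a b : ℕ) :
    Multiset.map f (univ.filter fun i => f i ≠ 0).val =
        Multiset.replicate a 2 + Multiset.replicate b 1 ↔
      (∀ i, f i ≤ 2) ∧ #{i | f i = 2} = a ∧ #{i | f i ≠ 0} = a + b := by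
  rw [eq_replicate_add_replicate_iff (by decide)]
  refine and_congr ?_ (and_congr ?_ ?_)
  · simp only [Multiset.mem_map, mem_val, mem_filter_univ, forall_exists_index, and_imp,
      forall_apply_eq_imp_iff₂]
    exact forall_congr' fun i => by lia
  · rw [Multiset.count_map, ← filter_val, filter_filter, card_val]
    have two_mem_support (i : ι) : f i ≠ 0 ∧ 2 = f i ↔ f i = 2 := by lia
    simp only [two_mem_support]
  · rw [Multiset.card_map, card_val]

lemma exists_exponents_of_subset {ι : Type*} [Fintype ι] {A U : Finset ι} (hAU : A ⊆ U) :
    ∃ f : ι → ℕ, (∀ i, f i ≤ 2) ∧ (∀ i, f i ≤ #A + #U) ∧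
      univ.filter (fun i => f i ≠ 0) = U ∧ univ.filter (fun i => f i = 2) = A := by
  classical
  refine ⟨fun i => (if i ∈ A then 1 else 0) + (if i ∈ U then 1 else 0),
    fun _ => by grind, fun i => ?_, by grind, by grind⟩
  have card_A_pos (hi : i ∈ A) : 0 < #A := card_pos.mpr ⟨i, hi⟩
  have card_U_pos (hi : i ∈ U) : 0 < #U := card_pos.mpr ⟨i, hi⟩
  grind

lemma mSym_replicate_two_add_replicate_one (n a b : ℕ) :
    mSym n (Multiset.replicate a 2 + Multiset.replicate b 1) = twoOneSymm (Fin n) ℤ a b := by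
  have sum_parts : (Multiset.replicate a 2 + Multiset.replicate b 1).sum = 2 * a + b := by
    simp [mul_comm]
  simp only [mSym, map_support_eq_replicate_two_add_replicate_one_iff]
  rw [sum_parts, ← sum_filter, twoOneSymm, sum_sigma']
  refine sum_nbij
    (fun f => ⟨univ.filter fun i => (f i : ℕ) ≠ 0, univ.filter fun i => (f i : ℕ) = 2⟩)
    ?_ ?_ ?_ ?_
  · intro f hf
    obtain ⟨-, card_two, card_support⟩ := (mem_filter_univ f).mp hf
    simp only [mem_sigma, mem_powersetCard, subset_univ, true_and]
    exact ⟨card_support, monotone_filter_right _ fun _ _ _ => by lia, card_two⟩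
  · intro f hf g hg hfg
    have f_le := ((mem_filter_univ f).mp hf).1
    have g_le := ((mem_filter_univ g).mp hg).1
    simp only [Sigma.mk.injEq, heq_eq_eq, Finset.ext_iff, mem_filter_univ] at hfg
    ext i
    grind
  · rintro ⟨U, A⟩ h
    simp only [coe_sigma, Set.mem_sigma_iff, mem_coe, mem_powersetCard, subset_univ,
      true_and] at h
    obtain ⟨card_U, hAU, card_A⟩ := h
    obtain ⟨g, g_le_two, g_le_card, support_g, two_g⟩ := exists_exponents_of_subset hAU
    refine ⟨fun i => ⟨g i, by have := g_le_card i; lia⟩, ?_, by simp only [support_g, two_g]⟩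
    simp only [coe_filter, Set.mem_ofPred_eq, mem_univ, true_and, support_g, two_g]
    exact ⟨g_le_two, card_A, card_U⟩
  · intro f hf
    have f_le := ((mem_filter_univ f).mp hf).1
    simp only [prod_filter, ← prod_mul_distrib]
    refine prod_congr rfl fun i _ => ?_
    have := f_le i
    interval_cases (f i : ℕ) <;> simp [sq]

end MSym

theorem stmt_12_general (n a b : ℕ) :
    mSym n (Multiset.replicate a 2 + Multiset.replicate b 1) =
      ∑ pj ∈ antidiagonal a, ((-1) ^ pj.2 * (lucasTriangle b pj.2 : ℤ)) •
        (esymm (Fin n) ℤ pj.1 * esymm (Fin n) ℤ (a + b + pj.2)) := by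
  rw [mSym_replicate_two_add_replicate_one, twoOneSymm_eq_sum_esymm_mul_esymm]

theorem stmt_12 (n : ℕ) (hn : 1 ≤ n) (i : ℕ) (hi : 3 ≤ i) :
    mSym n (2 ::ₘ 2 ::ₘ 2 ::ₘ Multiset.replicate (i - 3) 1)
      = esymm (Fin n) ℤ 3 * esymm (Fin n) ℤ (i) - C (((i : ℤ) - 1 : ℤ)) * esymm (Fin n) ℤ 2 * esymm (Fin n) ℤ (i + 1)
        + C ((((i : ℤ)^2 - (i : ℤ) - 2) / 2 : ℤ)) * esymm (Fin n) ℤ 1 * esymm (Fin n) ℤ (i + 2)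
        - C ((((i : ℤ)^3 - 7 * (i : ℤ) + 6) / 6 : ℤ)) * esymm (Fin n) ℤ (i + 3) := by
  obtain ⟨b, rfl⟩ := Nat.exists_eq_add_of_le' hi
  have partition : 2 ::ₘ 2 ::ₘ 2 ::ₘ Multiset.replicate (b + 3 - 3) 1 =
      Multiset.replicate 3 2 + Multiset.replicate b 1 := by
    simp [Multiset.replicate_succ]
  rw [partition, stmt_12_general]
  simp only [Nat.sum_antidiagonal_succ', HasAntidiagonal.antidiagonal_zero, sum_singleton,
    zero_add, Nat.reduceAdd, lucasTriangle_zero, lucasTriangle_one, natCast_lucasTriangle_two,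
    natCast_lucasTriangle_three, esymm_zero, add_comm 3 b, C_mul', smul_mul_assoc, one_mul]
  push_cast
  module
end

section
/- For every n ≥ 1 and every integer i ≥ 2, in ℤ[x₁,…,xₙ] one has m_{(4,2,1^{i−2})} = σ₁²·σ₂·σᵢ − 2·σ₂²·σᵢ − σ₁·σ₃·σᵢ + 4·σ₄·σᵢ + (3i−1)·σ₁·σ₂·σ_{i+1} − i·σ₁³·σ_{i+1} − (3i−3)·σ₃·σ_{i+1} − (2i−2)·σ₂·σ_{i+2} + i·σ₁²·σ_{i+2} − (2i+2)·σ₁·σ_{i+3} + (i² + 3i − 4)·σ_{i+4}. -/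
open MvPolynomial

/-!
Multiplying the monomial symmetric polynomial `m_l` by the power sum `p_a` raises one exponent `b`
of each monomial (possibly `b = 0`) to `a + b`, so `p_a * m_l` is a combination of polynomials
`m_{l'}`, where `l'` is `l` with one part `b` replaced by `a + b`. For `p_a * σ_{j+1}` this is the
hook recurrence `m_{(a+1,1^j)} = p_a σ_{j+1} - m_{(a,1^{j+1})}`, and for `p_1 * m_{(4,1^{j+1})}` it
gives `m_{(4,2,1^j)} = p_1 m_{(4,1^{j+1})} - (j+2) m_{(4,1^{j+2})} - m_{(5,1^{j+1})}`. Together they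
express `m_{(4,2,1^j)}` through power sums and elementary symmetric polynomials, and Newton's
identities eliminate the power sums.
-/

open Finset
open Finsupp (single)

theorem zero_notMem_replicate_one (j : ℕ) : 0 ∉ Multiset.replicate j 1 :=
  fun h ↦ zero_ne_one (Multiset.eq_of_mem_replicate h)

section Exponents

variable {σ : Type*}

/-- The multiset of nonzero exponents of the monomial `X ^ d`; `msymm σ R μ` is the sum of the
monomials for which it is `μ.parts`. -/
def exponents (d : σ →₀ ℕ) : Multiset ℕ :=
  d.support.val.map d

theorem zero_notMem_exponents (d : σ →₀ ℕ) : 0 ∉ exponents d := by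
  simp [exponents]

theorem mem_exponents {d : σ →₀ ℕ} {k : σ} (hk : d k ≠ 0) : d k ∈ exponents d :=
  Multiset.mem_map_of_mem d (Finsupp.mem_support_iff.2 hk)

theorem exponents_eq_map_filter [Fintype σ] (d : σ →₀ ℕ) :
    exponents d = (univ.filter fun i ↦ d i ≠ 0).val.map d := by
  rw [exponents]
  congr
  ext i
  simp

theorem count_exponents [Fintype σ] (d : σ →₀ ℕ) {c : ℕ} (hc : c ≠ 0) :
    (exponents d).count c = #{k | d k = c} := by
  classical
  rw [exponents, Multiset.count_map, ← Finset.filter_val, Finset.card_val]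
  congr 1
  ext k
  simp only [mem_filter, Finsupp.mem_support_iff, mem_univ, true_and, eq_comm (a := c)]
  exact and_iff_right_of_imp fun h ↦ h.trans_ne hc

theorem exponents_eq_cons_erase {d : σ →₀ ℕ} {k : σ} (hk : d k ≠ 0) :
    exponents d = d k ::ₘ exponents (d.erase k) := by
  classical
  have erase_apply : ∀ i ∈ (d.support.erase k).val, d.erase k i = d i := fun i hi ↦
    Finsupp.erase_ne (Finset.ne_of_mem_erase hi)
  rw [exponents, exponents, Finsupp.support_erase, Multiset.map_congr rfl erase_apply,
    ← Multiset.map_cons d k, Finset.erase_val, Multiset.cons_erase (Finsupp.mem_support_iff.2 hk)]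

theorem exponents_erase (d : σ →₀ ℕ) (k : σ) :
    exponents (d.erase k) = (exponents d).erase (d k) := by
  by_cases hk : d k = 0
  · rw [hk, Multiset.erase_of_notMem (zero_notMem_exponents d),
      Finsupp.erase_of_notMem_support (Finsupp.notMem_support_iff.2 hk)]
  · rw [exponents_eq_cons_erase hk, Multiset.erase_cons_head]

theorem exponents_add_single (d : σ →₀ ℕ) (k : σ) {a : ℕ} (ha : a ≠ 0) :
    exponents (d + single k a) = (a + d k) ::ₘ (exponents d).erase (d k) := by
  have apply_self : (d + single k a) k = a + d k := by simp [add_comm]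
  rw [exponents_eq_cons_erase (k := k) (by omega), apply_self, Finsupp.erase_add,
    Finsupp.erase_single, add_zero, exponents_erase]

theorem exponents_tsub_single_eq_iff {d : σ →₀ ℕ} {k : σ} {a : ℕ} (ha : a ≠ 0)
    (hk : a ≤ d k) {l : Multiset ℕ} (hl : 0 ∉ l) :
    exponents (d - single k a) = l ↔ d k - a ∈ insert 0 l.toFinset ∧
      exponents d = (a + (d k - a)) ::ₘ l.erase (d k - a) := by
  obtain ⟨e, rfl⟩ : ∃ e, d = e + single k a :=
    ⟨_, (tsub_add_cancel_of_le (Finsupp.single_le_iff.2 hk)).symm⟩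
  have apply_self : (e + single k a) k - a = e k := by simp
  rw [apply_self, add_tsub_cancel_right, exponents_add_single e k ha, Multiset.cons_inj_right,
    mem_insert, Multiset.mem_toFinset]
  constructor
  · rintro rfl
    exact ⟨or_iff_not_imp_left.2 mem_exponents, rfl⟩
  · rintro ⟨mem, h⟩
    by_cases hk0 : e k = 0
    · rwa [hk0, Multiset.erase_of_notMem (zero_notMem_exponents e),
        Multiset.erase_of_notMem hl] at h
    · rw [← Multiset.cons_erase (mem_exponents hk0), h,
        Multiset.cons_erase (mem.resolve_left hk0)]

theorem exponents_sum_single_one (t : Finset σ) :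
    exponents (∑ k ∈ t, single k 1) = Multiset.replicate #t 1 := by
  classical
  induction t using Finset.induction_on with
  | empty => simp [exponents]
  | insert k t hk ih =>
    have apply_self : (∑ i ∈ t, single i 1 : σ →₀ ℕ) k = 0 := by
      simp [Finsupp.finsetSum_apply, Finsupp.single_apply, hk]
    rw [sum_insert hk, add_comm, exponents_add_single _ k one_ne_zero, apply_self, ih,
      Multiset.erase_of_notMem (zero_notMem_replicate_one _), card_insert_of_notMem hk,
      Multiset.replicate_succ]

end Exponents

theorem toFinset_replicate_succ {α : Type*} [DecidableEq α] (j : ℕ) (c : α) :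
    (Multiset.replicate (j + 1) c).toFinset = {c} := by
  rw [Multiset.toFinset_replicate, if_neg j.succ_ne_zero]

section MonomialSymmetric

variable {σ : Type*} (R : Type*) [CommSemiring R]

theorem coeff_psum_mul [Fintype σ] (a : ℕ) (p : MvPolynomial σ R) (d : σ →₀ ℕ) :
    coeff d (psum σ R a * p) = ∑ k, if a ≤ d k then coeff (d - single k a) p else 0 := by
  simp only [psum, Finset.sum_mul, coeff_sum, X_pow_eq_monomial, coeff_monomial_mul',
    Finsupp.single_le_iff, one_mul]

theorem prod_map_X_eq_monomial [DecidableEq σ] (s : Multiset σ) :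
    (s.map X).prod = (monomial s.toFinsupp 1 : MvPolynomial σ R) := by
  induction s using Multiset.induction_on with
  | empty => simp
  | cons k s ih =>
    rw [Multiset.map_cons, Multiset.prod_cons, ih, ← Multiset.singleton_add, map_add,
      Multiset.toFinsupp_singleton, X, monomial_mul, one_mul]

variable [Fintype σ] [DecidableEq σ]

theorem coeff_msymm {n : ℕ} (μ : n.Partition) (d : σ →₀ ℕ) :
    coeff d (msymm σ R μ) = if exponents d = μ.parts then 1 else 0 := by
  have parts_ofSym (s : Sym σ n) :
      (Nat.Partition.ofSym s).parts = exponents s.1.toFinsupp := rfl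
  simp only [msymm, prod_map_X_eq_monomial, coeff_sum, coeff_monomial]
  split_ifs with h
  · have card_eq : Multiset.card d.toMultiset = n := by
      rw [Finsupp.card_toMultiset, ← μ.parts_sum, ← h]
      rfl
    have ofSym_eq : .ofSym (.mk d.toMultiset card_eq) = μ := by
      ext1
      rw [parts_ofSym, ← h]
      simp
    let s : {s : Sym σ n // .ofSym s = μ} := ⟨.mk d.toMultiset card_eq, ofSym_eq⟩
    rw [Fintype.sum_eq_single s, if_pos (by simp [s])]
    intro s' hs'
    rw [if_neg]
    rintro rfl
    exact hs' (by ext1; ext1; simp [s])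
  · refine sum_eq_zero fun s _ ↦ if_neg ?_
    rintro rfl
    exact h (by rw [← parts_ofSym, s.2])

theorem coeff_msymm_ofMultiset {l : Multiset ℕ} (hl : 0 ∉ l) (d : σ →₀ ℕ) :
    coeff d (msymm σ R (.ofMultiset l)) = if exponents d = l then 1 else 0 := by
  rw [coeff_msymm]
  congr!
  exact Multiset.filter_eq_self.2 fun b hb ↦ ne_of_mem_of_not_mem hb hl

theorem coeff_count_smul_msymm_cons {c : ℕ} (hc : c ≠ 0) {l : Multiset ℕ} (hl : 0 ∉ l)
    (d : σ →₀ ℕ) :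
    coeff d ((l.count c + 1) • msymm σ R (.ofMultiset (c ::ₘ l))) =
      ∑ k, if d k = c ∧ exponents d = c ::ₘ l then 1 else 0 := by
  rw [coeff_smul, coeff_msymm_ofMultiset R (by simp [hc.symm, hl])]
  by_cases h : exponents d = c ::ₘ l
  · have count_eq : l.count c + 1 = #{k | d k = c} := by
      rw [← count_exponents d hc, h, Multiset.count_cons_self]
    simp [h, count_eq]
  · simp [h]

theorem psum_mul_msymm {a : ℕ} (ha : a ≠ 0) {l : Multiset ℕ} (hl : 0 ∉ l) :
    psum σ R a * msymm σ R (.ofMultiset l) =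
      (l.count a + 1) • msymm σ R (.ofMultiset (a ::ₘ l)) + ∑ b ∈ l.toFinset,
        (l.count (a + b) + 1) • msymm σ R (.ofMultiset ((a + b) ::ₘ l.erase b)) := by
  suffices psum σ R a * msymm σ R (.ofMultiset l) = ∑ b ∈ insert 0 l.toFinset,
      (l.count (a + b) + 1) • msymm σ R (.ofMultiset ((a + b) ::ₘ l.erase b)) by
    rw [this, sum_insert (by simpa using hl), Multiset.erase_of_notMem hl, add_zero]
  ext d
  have coeff_term (b : ℕ) :
      coeff d ((l.count (a + b) + 1) • msymm σ R (.ofMultiset ((a + b) ::ₘ l.erase b))) =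
        ∑ k, if d k = a + b ∧ exponents d = (a + b) ::ₘ l.erase b then (1 : R) else 0 := by
    rw [← coeff_count_smul_msymm_cons R (by omega) fun h ↦ hl (Multiset.mem_of_mem_erase h),
      Multiset.count_erase_of_ne (by omega)]
  simp only [coeff_psum_mul, coeff_sum, coeff_term, coeff_msymm_ofMultiset R hl]
  rw [sum_comm]
  refine sum_congr rfl fun k _ ↦ ?_
  by_cases hk : a ≤ d k
  · have eq_iff (b : ℕ) : d k = a + b ↔ d k - a = b := by omega
    simp only [if_pos hk, exponents_tsub_single_eq_iff ha hk hl, eq_iff, ite_and, sum_ite_eq]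
  · rw [if_neg hk, sum_eq_zero fun b _ ↦ if_neg (by omega)]

theorem msymm_replicate_one (j : ℕ) :
    msymm σ R (.ofMultiset (Multiset.replicate j 1)) = esymm σ R j := by
  ext d
  rw [coeff_msymm_ofMultiset R (zero_notMem_replicate_one j), esymm_eq_sum_monomial]
  simp only [coeff_sum, coeff_monomial]
  split_ifs with h
  · have eq_sum : ∑ i ∈ d.support, single i 1 = d := by
      nth_rw 2 [← Finsupp.sum_single d]
      refine sum_congr rfl fun i hi ↦ ?_
      have apply_eq_one : d i = 1 :=
        Multiset.eq_of_mem_replicate (h ▸ mem_exponents (Finsupp.mem_support_iff.1 hi))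
      rw [apply_eq_one]
    have mem : d.support ∈ powersetCard j univ := mem_powersetCard.2
      ⟨subset_univ _, by simpa [exponents] using congrArg Multiset.card h⟩
    rw [sum_eq_single_of_mem _ mem, if_pos eq_sum]
    rintro t - ht
    refine if_neg fun h_sum ↦ ht ?_
    ext i
    simp [← h_sum, Finsupp.finsetSum_apply, Finsupp.single_apply]
  · refine (sum_eq_zero fun t ht ↦ if_neg ?_).symm
    rintro rfl
    exact h (by rw [exponents_sum_single_one, (mem_powersetCard.1 ht).2])

end MonomialSymmetric

section PowerSumProducts

variable (σ R : Type*) [Fintype σ] [DecidableEq σ] [CommSemiring R]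

theorem psum_one_mul_esymm (j : ℕ) :
    psum σ R 1 * esymm σ R (j + 1) = (j + 2) * esymm σ R (j + 2) +
      msymm σ R (.ofMultiset (2 ::ₘ Multiset.replicate j 1)) := by
  rw [← msymm_replicate_one, psum_mul_msymm R one_ne_zero (zero_notMem_replicate_one _),
    toFinset_replicate_succ, sum_singleton, Multiset.count_replicate_self,
    Multiset.count_eq_zero_of_notMem (by simp [Multiset.mem_replicate]),
    ← Multiset.replicate_succ, msymm_replicate_one, Multiset.replicate_succ 1 j,
    Multiset.erase_cons_head, nsmul_eq_mul]
  norm_num [add_assoc]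

theorem psum_mul_esymm {a : ℕ} (ha : 1 < a) (j : ℕ) :
    psum σ R a * esymm σ R (j + 1) =
      msymm σ R (.ofMultiset (a ::ₘ Multiset.replicate (j + 1) 1)) +
        msymm σ R (.ofMultiset ((a + 1) ::ₘ Multiset.replicate j 1)) := by
  have count_eq_zero {c : ℕ} (hc : 1 < c) : (Multiset.replicate (j + 1) 1).count c = 0 :=
    Multiset.count_eq_zero_of_notMem fun h ↦ hc.ne' (Multiset.eq_of_mem_replicate h)
  rw [← msymm_replicate_one, psum_mul_msymm R (by omega) (zero_notMem_replicate_one _),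
    toFinset_replicate_succ, sum_singleton, count_eq_zero ha, count_eq_zero (by omega),
    zero_add, one_smul, one_smul, Multiset.replicate_succ, Multiset.erase_cons_head]

theorem psum_one_mul_msymm_hook {a : ℕ} (ha : 2 < a) (j : ℕ) :
    psum σ R 1 * msymm σ R (.ofMultiset (a ::ₘ Multiset.replicate (j + 1) 1)) =
      (j + 2) * msymm σ R (.ofMultiset (a ::ₘ Multiset.replicate (j + 2) 1)) +
      msymm σ R (.ofMultiset ((a + 1) ::ₘ Multiset.replicate (j + 1) 1)) +
      msymm σ R (.ofMultiset (a ::ₘ 2 ::ₘ Multiset.replicate j 1)) := by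
  have count_one : (a ::ₘ Multiset.replicate (j + 1) 1).count 1 = j + 1 := by
    rw [Multiset.count_cons_of_ne (by omega), Multiset.count_replicate_self]
  have count_eq_zero {c : ℕ} (hc : 1 < c) (hca : c ≠ a) :
      (a ::ₘ Multiset.replicate (j + 1) 1).count c = 0 := by
    rw [Multiset.count_cons_of_ne hca, Multiset.count_replicate, if_neg hc.ne]
  have zero_notMem : 0 ∉ a ::ₘ Multiset.replicate (j + 1) 1 := by
    rw [Multiset.mem_cons, not_or]
    exact ⟨by omega, zero_notMem_replicate_one _⟩
  rw [psum_mul_msymm R one_ne_zero zero_notMem, Multiset.toFinset_cons,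
    toFinset_replicate_succ, sum_pair (by omega), count_one, count_eq_zero (by omega) (by omega),
    count_eq_zero (by omega) (by omega),
    Multiset.erase_cons_head, Multiset.erase_cons_tail _ (by omega),
    Multiset.replicate_succ 1 (j + 1), Multiset.replicate_succ 1 j, Multiset.erase_cons_head,
    Multiset.cons_swap 1 a, Multiset.cons_swap (1 + 1) a, add_comm 1 a, nsmul_eq_mul]
  push_cast
  ring

end PowerSumProducts

section Newton

variable (σ R : Type*) [Fintype σ] [CommRing R]

theorem psum_one_eq_esymm_one : psum σ R 1 = esymm σ R 1 := by
  rw [psum_one, esymm_one]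

theorem psum_two_eq_esymm : psum σ R 2 = esymm σ R 1 ^ 2 - 2 * esymm σ R 2 := by
  have pairs : {x ∈ antidiagonal 2 | x.1 ∈ Set.Ioo 0 2} = {(1, 1)} := by decide
  rw [psum_eq_mul_esymm_sub_sum σ R 2 two_pos, pairs, sum_singleton, psum_one_eq_esymm_one]
  push_cast
  ring

theorem psum_three_eq_esymm :
    psum σ R 3 = esymm σ R 1 ^ 3 - 3 * esymm σ R 1 * esymm σ R 2 + 3 * esymm σ R 3 := by
  have pairs : {x ∈ antidiagonal 3 | x.1 ∈ Set.Ioo 0 3} = {(1, 2), (2, 1)} := by decide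
  rw [psum_eq_mul_esymm_sub_sum σ R 3 three_pos, pairs, sum_pair (by decide),
    psum_one_eq_esymm_one, psum_two_eq_esymm]
  push_cast
  ring

theorem psum_four_eq_esymm :
    psum σ R 4 = esymm σ R 1 ^ 4 - 4 * esymm σ R 1 ^ 2 * esymm σ R 2 + 2 * esymm σ R 2 ^ 2 +
      4 * esymm σ R 1 * esymm σ R 3 - 4 * esymm σ R 4 := by
  have pairs : {x ∈ antidiagonal 4 | x.1 ∈ Set.Ioo 0 4} = {(1, 3), (2, 2), (3, 1)} := by decide
  rw [psum_eq_mul_esymm_sub_sum σ R 4 four_pos, pairs, sum_insert (by decide),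
    sum_pair (by decide), psum_one_eq_esymm_one, psum_two_eq_esymm, psum_three_eq_esymm]
  push_cast
  ring

end Newton

section Hooks

variable (σ R : Type*) [Fintype σ] [DecidableEq σ] [CommRing R]

theorem msymm_hook (a j : ℕ) :
    msymm σ R (.ofMultiset ((a + 2) ::ₘ Multiset.replicate j 1)) =
      ∑ k ∈ range (a + 1), (-1) ^ k * psum σ R (a + 1 - k) * esymm σ R (j + 1 + k) -
        (-1) ^ a * (j + a + 2) * esymm σ R (j + a + 2) := by
  induction a generalizing j with
  | zero =>
    have raise_one := psum_one_mul_esymm σ R j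
    simp only [zero_add, sum_range_one, pow_zero, Nat.sub_zero, add_zero, Nat.cast_zero]
    linear_combination -raise_one
  | succ a ih =>
    have raise_part := psum_mul_esymm σ R (a := a + 2) (by omega) j
    rw [eq_sub_of_add_eq' raise_part.symm, ih, sum_range_succ' _ (a + 1)]
    have shift (k : ℕ) : (-1) ^ (k + 1) * psum σ R (a + 1 + 1 - (k + 1)) *
        esymm σ R (j + 1 + (k + 1)) =
        -((-1) ^ k * psum σ R (a + 1 - k) * esymm σ R (j + 1 + 1 + k)) := by
      rw [Nat.add_sub_add_right, pow_succ, add_right_comm (j + 1) 1 k]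
      ring_nf
    simp only [shift, sum_neg_distrib]
    push_cast
    ring_nf

theorem msymm_four_hook (j : ℕ) :
    msymm σ R (.ofMultiset (4 ::ₘ Multiset.replicate j 1)) =
      psum σ R 3 * esymm σ R (j + 1) - psum σ R 2 * esymm σ R (j + 2) +
        psum σ R 1 * esymm σ R (j + 3) - (j + 4) * esymm σ R (j + 4) := by
  rw [msymm_hook σ R 2 j]
  simp only [sum_range_succ, sum_range_zero, Nat.reduceAdd, Nat.reduceSub, add_assoc]
  push_cast
  ring

theorem msymm_cons_two_hook {a : ℕ} (ha : 2 < a) (j : ℕ) :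
    msymm σ R (.ofMultiset (a ::ₘ 2 ::ₘ Multiset.replicate j 1)) =
      psum σ R 1 * msymm σ R (.ofMultiset (a ::ₘ Multiset.replicate (j + 1) 1)) -
        (j + 1) * msymm σ R (.ofMultiset (a ::ₘ Multiset.replicate (j + 2) 1)) -
        psum σ R a * esymm σ R (j + 2) := by
  have raise_hook := psum_one_mul_msymm_hook σ R ha j
  have raise_part := psum_mul_esymm σ R (one_lt_two.trans ha) (j + 1)
  linear_combination raise_part - raise_hook

theorem stmt_18_general (i : ℕ) (hi : 2 ≤ i) :
    msymm σ R (.ofMultiset (4 ::ₘ 2 ::ₘ Multiset.replicate (i - 2) 1)) =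
      esymm σ R 1 ^ 2 * esymm σ R 2 * esymm σ R i - 2 * esymm σ R 2 ^ 2 * esymm σ R i
        - esymm σ R 1 * esymm σ R 3 * esymm σ R i + 4 * esymm σ R 4 * esymm σ R i
        + (3 * i - 1) * esymm σ R 1 * esymm σ R 2 * esymm σ R (i + 1)
        - i * esymm σ R 1 ^ 3 * esymm σ R (i + 1)
        - (3 * i - 3) * esymm σ R 3 * esymm σ R (i + 1)
        - (2 * i - 2) * esymm σ R 2 * esymm σ R (i + 2)
        + i * esymm σ R 1 ^ 2 * esymm σ R (i + 2)
        - (2 * i + 2) * esymm σ R 1 * esymm σ R (i + 3)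
        + (i ^ 2 + 3 * i - 4) * esymm σ R (i + 4) := by
  obtain ⟨j, rfl⟩ := Nat.exists_eq_add_of_le' hi
  rw [Nat.add_sub_cancel, msymm_cons_two_hook σ R (by norm_num), msymm_four_hook,
    msymm_four_hook, psum_one_eq_esymm_one, psum_two_eq_esymm, psum_three_eq_esymm,
    psum_four_eq_esymm]
  push_cast
  ring

end Hooks

theorem mSym_eq_msymm (n : ℕ) {l : Multiset ℕ} (hl : 0 ∉ l) :
    mSym n l = msymm (Fin n) ℤ (.ofMultiset l) := by
  let toFinsupp (f : Fin n → Fin (l.sum + 1)) : Fin n →₀ ℕ :=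
    Finsupp.indicator univ fun i _ ↦ (f i : ℕ)
  have toFinsupp_apply (f) (i) : toFinsupp f i = f i := by simp [toFinsupp]
  have exponents_toFinsupp (f : Fin n → Fin (l.sum + 1)) :
      Multiset.map (fun i ↦ (f i : ℕ)) (univ.filter fun i ↦ (f i : ℕ) ≠ 0).val =
        exponents (toFinsupp f) := by
    simp only [exponents_eq_map_filter, toFinsupp_apply]
  ext d
  simp only [mSym, exponents_toFinsupp, coeff_msymm_ofMultiset ℤ hl, coeff_sum,
    apply_ite (coeff d), coeff_prod_X_pow, coeff_zero]
  split_ifs with h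
  · have le_sum (i : Fin n) : d i ≤ l.sum := by
      by_cases hi : d i = 0
      · omega
      · exact Multiset.le_sum_of_mem (h ▸ mem_exponents hi)
    let f (i : Fin n) : Fin (l.sum + 1) := ⟨d i, Nat.lt_succ_of_le (le_sum i)⟩
    have toFinsupp_f : toFinsupp f = d := Finsupp.ext fun i ↦ toFinsupp_apply f i
    rw [Fintype.sum_eq_single f, if_pos (by rw [toFinsupp_f, h]), if_pos toFinsupp_f.symm]
    intro g hg
    refine ite_eq_right_iff.2 fun _ ↦ if_neg fun hd ↦ hg ?_
    ext i
    rw [← toFinsupp_apply g, ← toFinsupp_apply f, toFinsupp_f, hd]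
  · refine sum_eq_zero fun f _ ↦ ite_eq_right_iff.2 fun hf ↦ if_neg ?_
    rintro rfl
    exact h hf

theorem stmt_18 (n : ℕ) (hn : 1 ≤ n) (i : ℕ) (hi : 2 ≤ i) :
    mSym n (4 ::ₘ 2 ::ₘ Multiset.replicate (i - 2) 1)
      = esymm (Fin n) ℤ 1^2 * esymm (Fin n) ℤ 2 * esymm (Fin n) ℤ (i) - C ((2 : ℤ)) * esymm (Fin n) ℤ 2^2 * esymm (Fin n) ℤ (i) - esymm (Fin n) ℤ 1 * esymm (Fin n) ℤ 3 * esymm (Fin n) ℤ (i)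
        + C ((4 : ℤ)) * esymm (Fin n) ℤ 4 * esymm (Fin n) ℤ (i)
        + C ((3 * (i : ℤ) - 1 : ℤ)) * esymm (Fin n) ℤ 1 * esymm (Fin n) ℤ 2 * esymm (Fin n) ℤ (i + 1)
        - C (((i : ℤ) : ℤ)) * esymm (Fin n) ℤ 1^3 * esymm (Fin n) ℤ (i + 1)
        - C ((3 * (i : ℤ) - 3 : ℤ)) * esymm (Fin n) ℤ 3 * esymm (Fin n) ℤ (i + 1)
        - C ((2 * (i : ℤ) - 2 : ℤ)) * esymm (Fin n) ℤ 2 * esymm (Fin n) ℤ (i + 2)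
        + C (((i : ℤ) : ℤ)) * esymm (Fin n) ℤ 1^2 * esymm (Fin n) ℤ (i + 2)
        - C ((2 * (i : ℤ) + 2 : ℤ)) * esymm (Fin n) ℤ 1 * esymm (Fin n) ℤ (i + 3)
        + C (((i : ℤ)^2 + 3 * (i : ℤ) - 4 : ℤ)) * esymm (Fin n) ℤ (i + 4) := by
  rw [mSym_eq_msymm n (by simp [Multiset.mem_replicate]), stmt_18_general (Fin n) ℤ i hi]
  simp
end
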